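/- arXiv:1103.5517 — 2 statements merged into one kernel-verified Lean document; each statement's English description precedes it below -/
import Mathlib

section
/- Characterization of laws of finite connected graphs: if a probability measure μ on Ĝ_M is sustained by a nonempty finite connected simple graph G with maximal degree at most M and μ satisfies the intrinsic Mass Transport Principle, then μ = Ψ(G), i.e. μ[G,x] = |Aut(G)x|/|V(G)| for every x ∈ V(G). -/
/-!
The measure `μ` is determined on an arbitrary set `s` of rooted graphs by a single mass transport:
every vertex sends unit mass to each vertex whose rooted class lies in `s`. In a representative of
the class of `(G, x)`, the root receives mass `|V|` if its class lies in `s` and nothing otherwise,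
while it sends out mass `#{y | [G, y] ∈ s}`, which does not depend on the root. Since `μ` is
carried by the classes `[G, x]` and has total mass `1`, the Mass Transport Principle gives
`μ s * |V| = #{y | [G, y] ∈ s}`, that is, `μ s = law G s`. For `s = {[G, x]}`, the vertices counted
on the right form the orbit of `x` under the automorphism group.
-/

open MeasureTheory Filter Topology ENNReal
open scoped Classical

/-- A rooted graph: a simple graph together with a distinguished root vertex. -/
structure RootedGraph : Type 1 where
  V : Type
  G : SimpleGraph V
  root : V

namespace RootedGraph

/-- Isomorphism of rooted graphs: a graph isomorphism carrying root to root. -/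
def Iso (A B : RootedGraph) : Prop :=
  ∃ φ : A.G ≃g B.G, φ A.root = B.root

/-- The rooted ball of radius `r` around the root: the subgraph induced by the
vertices at shortest-path distance at most `r` from the root. -/
def ball (A : RootedGraph) (r : ℕ) : RootedGraph where
  V := {v : A.V // A.G.dist A.root v ≤ r}
  G := SimpleGraph.induce {v : A.V | A.G.dist A.root v ≤ r} A.G
  root := ⟨A.root, by change A.G.dist A.root A.root ≤ r; simp [SimpleGraph.dist_self]⟩

/-- The metric ρ on (isomorphism classes of) rooted graphs. -/
noncomputable def rho (A B : RootedGraph) : ℝ :=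
  if A.Iso B then 0
  else 1 / (1 + ((sSup {s : ℕ | (A.ball s).Iso (B.ball s)} : ℕ) : ℝ))

/-- Membership in Ĝ: connected and locally finite. -/
def InG (A : RootedGraph) : Prop :=
  A.G.Connected ∧ ∀ v : A.V, (A.G.neighborSet v).Finite

/-- Membership in Ĝ_M: connected, locally finite, and all degrees at most `M`. -/
def InGM (M : ℕ) (A : RootedGraph) : Prop :=
  A.InG ∧ ∀ v : A.V, (A.G.neighborSet v).ncard ≤ M

end RootedGraph

/-- The space of isomorphism classes of rooted graphs. -/
def RG := Quot RootedGraph.Iso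

noncomputable instance : MeasurableSpace RG := ⊤

/-- The isomorphism class of a rooted graph. -/
def cls (A : RootedGraph) : RG := Quot.mk _ A

/-- The connected component of `x` in `G`, rooted at `x`. -/
def comp {V : Type} (G : SimpleGraph V) (x : V) : RootedGraph :=
  ⟨{v : V // G.Reachable x v}, SimpleGraph.induce {v : V | G.Reachable x v} G,
    ⟨x, SimpleGraph.Reachable.refl x⟩⟩

/-- The orbit of a vertex under the automorphism group of the graph. -/
def orbit {V : Type} (G : SimpleGraph V) (o : V) : Set V :=
  {v : V | ∃ σ : G ≃g G, σ v = o}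

/-- The law of a finite graph: the image of the uniform measure on the vertex set
under the map sending a vertex to its rooted connected component. -/
noncomputable def law {V : Type} (G : SimpleGraph V) : Measure RG :=
  (Nat.card V : ℝ≥0∞)⁻¹ • Measure.sum (fun x : V => Measure.dirac (cls (comp G x)))

/-- Bounded continuous real-valued functions on (Ĝ_M, ρ), described on representatives. -/
def BddContOn (M : ℕ) (f : RG → ℝ) : Prop :=
  (∃ C : ℝ, ∀ c : RG, |f c| ≤ C) ∧
  ∀ A : RootedGraph, A.InGM M → ∀ ε : ℝ, 0 < ε → ∃ δ : ℝ, 0 < δ ∧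
    ∀ B : RootedGraph, B.InGM M → RootedGraph.rho A B < δ → |f (cls A) - f (cls B)| < ε

/-- Weak convergence of a sequence of measures on Ĝ_M. -/
def WeakLimTo (M : ℕ) (μs : ℕ → Measure RG) (μ : Measure RG) : Prop :=
  ∀ f : RG → ℝ, BddContOn M f →
    Filter.Tendsto (fun n => ∫ c, f c ∂(μs n)) Filter.atTop (nhds (∫ c, f c ∂μ))

/-- A birooted graph: a simple graph with an ordered pair of roots. -/
structure BiRootedGraph : Type 1 where
  V : Type
  G : SimpleGraph V
  root1 : V
  root2 : V

/-- Isomorphism of birooted graphs. -/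
def BiRootedGraph.Iso (A B : BiRootedGraph) : Prop :=
  ∃ φ : A.G ≃g B.G, φ A.root1 = B.root1 ∧ φ A.root2 = B.root2

/-- The space of isomorphism classes of birooted graphs. -/
def BRG := Quot BiRootedGraph.Iso

/-- The isomorphism class of a birooted graph. -/
def bcls (A : BiRootedGraph) : BRG := Quot.mk _ A

/-- A measure on the space of (classes of) rooted graphs is unimodular if it satisfies the
intrinsic Mass Transport Principle: for every nonnegative (measurable) function `f` on
isomorphism classes of birooted graphs,
`∫ Σ_{x ∈ V(G)} f[G,x,o] dμ[G,o] = ∫ Σ_{x ∈ V(G)} f[G,o,x] dμ[G,o]`. -/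
def Unimodular (μ : MeasureTheory.Measure RG) : Prop :=
  ∀ f : BRG → ℝ≥0∞,
    ∫⁻ c, (∑' x : (Quot.out c).V,
        f (bcls ⟨(Quot.out c).V, (Quot.out c).G, x, (Quot.out c).root⟩)) ∂μ
      = ∫⁻ c, (∑' x : (Quot.out c).V,
        f (bcls ⟨(Quot.out c).V, (Quot.out c).G, (Quot.out c).root, x⟩)) ∂μ

/-- A probability measure on the space of classes of rooted graphs is sustained by a graph `G`
if its support is contained in the set of rooted connected components of `G`. -/
def SustainedBy (μ : MeasureTheory.Measure RG) {V : Type} (G : SimpleGraph V) : Prop :=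
  μ {c : RG | ∀ x : V, c ≠ cls (comp G x)} = 0

theorem RootedGraph.iso_equivalence : Equivalence RootedGraph.Iso where
  refl A := ⟨SimpleGraph.Iso.refl, rfl⟩
  symm := by
    rintro A B ⟨φ, h⟩
    exact ⟨φ.symm, by rw [← h]; exact φ.symm_apply_apply _⟩
  trans := by
    rintro A B C ⟨φ, h⟩ ⟨ψ, k⟩
    exact ⟨φ.trans ψ, by rw [← k, ← h]; rfl⟩

theorem cls_eq_iff {A B : RootedGraph} : cls A = cls B ↔ A.Iso B :=
  ⟨fun h => RootedGraph.iso_equivalence.eqvGen_iff.1 (Quot.eqvGen_exact h), fun h => Quot.sound h⟩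

/-- In a connected graph, the connected component rooted at `x` is the whole graph rooted
at `x`. -/
theorem cls_comp {V : Type} {G : SimpleGraph V} (hconn : G.Connected) (x : V) :
    cls (comp G x) = cls ⟨V, G, x⟩ :=
  cls_eq_iff.2 ⟨⟨Equiv.subtypeUnivEquiv fun v => hconn.preconnected x v, Iff.rfl⟩, rfl⟩

theorem cls_eq_cls_iff_mem_orbit {V : Type} (G : SimpleGraph V) (x y : V) :
    cls ⟨V, G, y⟩ = cls ⟨V, G, x⟩ ↔ y ∈ orbit G x :=
  cls_eq_iff

/-- The mass transport in which every vertex sends unit mass to each vertex whose rooted class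
lies in `s`; the second root is the target. -/
noncomputable def transportTo (s : Set RG) : BRG → ℝ≥0∞ :=
  Quot.lift (fun A => s.indicator 1 (cls ⟨A.V, A.G, A.root2⟩)) <| by
    rintro A B ⟨φ, -, h⟩
    have : cls ⟨A.V, A.G, A.root2⟩ = cls ⟨B.V, B.G, B.root2⟩ := cls_eq_iff.2 ⟨φ, h⟩
    simp only [this]

theorem transportTo_bcls (s : Set RG) (A : BiRootedGraph) :
    transportTo s (bcls A) = s.indicator 1 (cls ⟨A.V, A.G, A.root2⟩) := rfl

theorem cls_out (c : RG) : cls ⟨(Quot.out c).V, (Quot.out c).G, (Quot.out c).root⟩ = c :=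
  Quot.out_eq c

/-- The chosen representative of the class of `(G, x)` is isomorphic to `G`. -/
theorem exists_iso_out {V : Type} (G : SimpleGraph V) (x : V) {c : RG}
    (hc : c = cls ⟨V, G, x⟩) : Nonempty ((Quot.out c).G ≃g G) := by
  obtain ⟨φ, -⟩ := cls_eq_iff.1 ((cls_out c).trans hc)
  exact ⟨φ⟩

/-- Mass received by the root. -/
theorem tsum_in {V : Type} [Fintype V] (G : SimpleGraph V) (x : V) (s : Set RG) {c : RG}
    (hc : c = cls ⟨V, G, x⟩) :
    ∑' y : (Quot.out c).V,
        transportTo s (bcls ⟨(Quot.out c).V, (Quot.out c).G, y, (Quot.out c).root⟩)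
      = Fintype.card V * s.indicator 1 c := by
  obtain ⟨φ⟩ := exists_iso_out G x hc
  simp only [transportTo_bcls, cls_out]
  rw [← φ.toEquiv.symm.tsum_eq, tsum_fintype]
  simp

/-- Mass sent out by the root. -/
theorem tsum_out {V : Type} [Fintype V] (G : SimpleGraph V) (x : V) (s : Set RG) {c : RG}
    (hc : c = cls ⟨V, G, x⟩) :
    ∑' y : (Quot.out c).V,
        transportTo s (bcls ⟨(Quot.out c).V, (Quot.out c).G, (Quot.out c).root, y⟩)
      = ∑ y : V, s.indicator 1 (cls ⟨V, G, y⟩) := by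
  obtain ⟨φ⟩ := exists_iso_out G x hc
  simp only [transportTo_bcls]
  rw [← φ.toEquiv.symm.tsum_eq, tsum_fintype]
  refine Finset.sum_congr rfl fun y _ => ?_
  congr 1
  exact cls_eq_iff.2 ⟨φ, φ.toEquiv.apply_symm_apply y⟩

theorem law_apply {V : Type} [Fintype V] {G : SimpleGraph V} (hconn : G.Connected)
    (s : Set RG) :
    law G s = (Fintype.card V : ℝ≥0∞)⁻¹ * ∑ y : V, s.indicator 1 (cls ⟨V, G, y⟩) := by
  simp only [law, Measure.smul_apply, smul_eq_mul, Nat.card_eq_fintype_card,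
    Measure.sum_apply _ (show MeasurableSet s from trivial), tsum_fintype,
    Measure.dirac_apply' _ (show MeasurableSet s from trivial), cls_comp hconn]

/-- Characterization of laws of finite connected graphs: a probability measure sustained by a
nonempty finite connected graph `G` that satisfies the intrinsic Mass Transport Principle is
the law of `G`, i.e. `μ[G,x] = |Aut(G)x| / |V(G)|` for every vertex `x`. -/
theorem sustained_unimodular_eq_law (M : ℕ) {V : Type} [Fintype V] [Nonempty V]
    (G : SimpleGraph V) (hconn : G.Connected)
    (hdeg : ∀ v : V, (G.neighborSet v).ncard ≤ M)
    (μ : MeasureTheory.Measure RG) (hprob : MeasureTheory.IsProbabilityMeasure μ)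
    (huni : Unimodular μ) (hsus : SustainedBy μ G) :
    μ = law G ∧
    ∀ x : V, μ {cls (comp G x)}
      = ((orbit G x).ncard : ℝ≥0∞) / (Fintype.card V : ℝ≥0∞) := by
  have hμ : μ = law G := by
    ext s hs
    have hae : ∀ᵐ c ∂μ, ∃ x : V, c = cls ⟨V, G, x⟩ := by
      filter_upwards [measure_eq_zero_iff_ae_notMem.1 hsus] with c hc
      by_contra h
      exact hc fun x hx => h ⟨x, hx.trans (cls_comp hconn x)⟩
    -- both integrands in the Mass Transport Principle are explicit almost everywhere
    have key := huni (transportTo s)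
    rw [lintegral_congr_ae (hae.mono fun c ⟨x, hx⟩ => tsum_in G x s hx),
      lintegral_congr_ae (hae.mono fun c ⟨x, hx⟩ => tsum_out G x s hx),
      lintegral_const_mul' _ _ (by simp), lintegral_indicator_one hs,
      lintegral_const, measure_univ, mul_one] at key
    rw [law_apply hconn, ← key, ← mul_assoc,
      ENNReal.inv_mul_cancel (by simp) (by simp), one_mul]
  refine ⟨hμ, fun x => ?_⟩
  rw [hμ, law_apply hconn, cls_comp hconn, ENNReal.div_eq_inv_mul]
  congr 1
  simp only [Set.indicator_apply, Set.mem_singleton_iff, cls_eq_cls_iff_mem_orbit, Pi.one_apply]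
  rw [Finset.sum_boole, Set.ncard_eq_toFinset_card']
  congr 2
  ext y
  simp
end

section
/- If the Dirac measure δ_{[G,o]} on Ĝ_M is unimodular for some [G,o] ∈ Ĝ_M, then the graph G is vertex-transitive (any two vertices of G are related by a graph automorphism of G). -/
/-!
Let `B` be a representative of the class `[G,o]`. For a Dirac measure the mass transport principle
reads `∑ₓ f[G,x,o] = ∑ₓ f[G,o,x]`. Let every vertex outside the orbit of the root send unit mass to
each of its neighbours inside that orbit (`nonOrbitTransport`). The root sends nothing, so it
receives nothing, i.e. all its neighbours lie in its orbit (`neighbor_mem_orbit`). Every vertex of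
the orbit inherits this property, so the orbit is closed under adjacency and, `G` being connected,
is the whole vertex set (`orbit_eq_univ`).
-/

open MeasureTheory Filter Topology ENNReal
open scoped Classical

theorem RootedGraph.out_cls_iso (A : RootedGraph) : (Quot.out (cls A)).Iso A :=
  RootedGraph.iso_equivalence.eqvGen_iff.mp (Quot.eqvGen_exact (Quot.out_eq (cls A)))

/-- The transport in which a vertex `x` sends mass `1` to each adjacent vertex `y` such that `(G, y)`
is isomorphic to the fixed rooted graph `B` while `(G, x)` is not. -/
noncomputable def nonOrbitTransport (B : RootedGraph) : BRG → ℝ≥0∞ :=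
  Quot.lift
    (fun X => if X.G.Adj X.root1 X.root2 ∧ RootedGraph.Iso ⟨X.V, X.G, X.root2⟩ B ∧
      ¬ RootedGraph.Iso ⟨X.V, X.G, X.root1⟩ B then 1 else 0)
    (by
      rintro X Y ⟨φ, h1, h2⟩
      have hadj : X.G.Adj X.root1 X.root2 ↔ Y.G.Adj Y.root1 Y.root2 := by
        rw [← h1, ← h2]; exact φ.map_adj_iff.symm
      have key : ∀ x y, φ x = y →
          (RootedGraph.Iso ⟨X.V, X.G, x⟩ B ↔ RootedGraph.Iso ⟨Y.V, Y.G, y⟩ B) := by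
        intro x y hxy
        have e : RootedGraph.Iso ⟨X.V, X.G, x⟩ ⟨Y.V, Y.G, y⟩ := ⟨φ, hxy⟩
        exact ⟨fun k => RootedGraph.iso_equivalence.trans (RootedGraph.iso_equivalence.symm e) k,
          fun k => RootedGraph.iso_equivalence.trans e k⟩
      simp only [hadj, key _ _ h1, key _ _ h2])

theorem neighbor_mem_orbit (B : RootedGraph)
    (h : ∑' x : B.V, nonOrbitTransport B (bcls ⟨B.V, B.G, x, B.root⟩)
      = ∑' x : B.V, nonOrbitTransport B (bcls ⟨B.V, B.G, B.root, x⟩))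
    (x : B.V) (hx : B.G.Adj x B.root) : x ∈ orbit B.G B.root := by
  have hroot : RootedGraph.Iso ⟨B.V, B.G, B.root⟩ B := RootedGraph.iso_equivalence.refl B
  have hout : ∑' x : B.V, nonOrbitTransport B (bcls ⟨B.V, B.G, B.root, x⟩) = 0 := by
    rw [ENNReal.tsum_eq_zero]
    intro y
    exact if_neg fun k => k.2.2 hroot
  rw [hout, ENNReal.tsum_eq_zero] at h
  by_contra hn
  have hx1 : nonOrbitTransport B (bcls ⟨B.V, B.G, x, B.root⟩) = 1 :=
    if_pos ⟨hx, hroot, hn⟩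
  exact one_ne_zero (hx1.symm.trans (h x))

theorem orbit_eq_univ {V : Type} (G : SimpleGraph V) (hG : G.Connected) (o : V)
    (h : ∀ x, G.Adj x o → x ∈ orbit G o) (v : V) : v ∈ orbit G o := by
  obtain ⟨p⟩ := hG.preconnected v o
  induction p with
  | nil => exact ⟨RelIso.refl _, rfl⟩
  | cons hadj _ ih =>
    -- An automorphism moving the next vertex to `o` moves the current one to a neighbour of `o`.
    obtain ⟨σ, hσ⟩ := ih h
    obtain ⟨τ, hτ⟩ := h _ (hσ ▸ σ.map_adj_iff.mpr hadj)
    exact ⟨σ.trans τ, hτ⟩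

/-- If the Dirac measure at `[G,o] ∈ Ĝ_M` is unimodular, then `G` is vertex-transitive. -/
theorem dirac_unimodular_implies_vertexTransitive (M : ℕ) (A : RootedGraph)
    (hA : A.InGM M) (h : Unimodular (MeasureTheory.Measure.dirac (cls A))) :
    ∀ u v : A.V, ∃ σ : A.G ≃g A.G, σ u = v := by
  have hall : ∀ v : A.V, v ∈ orbit A.G A.root := by
    obtain ⟨φ, hφ⟩ := A.out_cls_iso
    have hmtp := h (nonOrbitTransport (Quot.out (cls A)))
    rw [lintegral_dirac' _ measurable_from_top, lintegral_dirac' _ measurable_from_top] at hmtp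
    refine orbit_eq_univ A.G hA.1.1 A.root fun x hx => ?_
    obtain ⟨σ, hσ⟩ := neighbor_mem_orbit _ hmtp (φ.symm x) (by
      rw [← φ.map_adj_iff, hφ, φ.apply_symm_apply]; exact hx)
    refine ⟨(φ.symm.trans σ).trans φ, ?_⟩
    change φ (σ (φ.symm x)) = A.root
    rw [hσ, hφ]
  intro u v
  obtain ⟨σ, hσ⟩ := hall u
  obtain ⟨τ, hτ⟩ := hall v
  refine ⟨σ.trans τ.symm, ?_⟩
  change τ.symm (σ u) = v
  rw [hσ, ← hτ, τ.symm_apply_apply]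
end
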